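/- Separated exact reduction under Assumption (A1): suppose each conditional map factors as M_k = E ∘ K_k with E and K_k linear maps on the n×n complex matrices, and suppose there exist scalars λ_k ∈ ℂ with E = Σ_{k∈Ω} λ_k M_k. Let R : Matrix n n ℂ →ₗ[ℂ] W and J : W →ₗ[ℂ] Matrix n n ℂ with R ∘ J = id_W and ker(J ∘ R) ⊆ N. Define Ǩ_k = R ∘ K_k ∘ J, Ě = R ∘ E ∘ J, and Č = C ∘ J. Then for every matrix ρ and every word w = [k_0, …, k_t] over Ω, C(M_w ρ) = Č( (Ě ∘ Ǩ_{k_t}) ∘ ⋯ ∘ (Ě ∘ Ǩ_{k_0}) (R ρ) ). -/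

import Mathlib

/-!
The non-observable subspace `N` is invariant under every `M k`, hence under their linear
combination `E`. The hypotheses on `R` and `J` say that `J ∘ R` is the identity modulo `N`, so
inserting it before or after `E` changes a state only by an element of `N`. Full and reduced states
therefore stay congruent modulo `N` along any word, and the output map `C` vanishes on `N`.
-/

open Matrix

/-- Composition of the conditional maps along a word `w = [k₀, …, k_t]`:
`Mword M w = M_{k_t} ∘ ⋯ ∘ M_{k₀}` (the empty word gives the identity). -/
def Mword {Ω V : Type*} [AddCommMonoid V] [Module ℂ V]
    (M : Ω → V →ₗ[ℂ] V) : List Ω → (V →ₗ[ℂ] V)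
  | [] => LinearMap.id
  | k :: w => (Mword M w).comp (M k)

/-- The non-observable subspace `N = {X | C (M_w X) = 0 for every word w}`. -/
def NonObs {Ω : Type*} {n : ℕ} {Y : Type*} [AddCommGroup Y] [Module ℂ Y]
    (M : Ω → Matrix (Fin n) (Fin n) ℂ →ₗ[ℂ] Matrix (Fin n) (Fin n) ℂ)
    (C : Matrix (Fin n) (Fin n) ℂ →ₗ[ℂ] Y) : Set (Matrix (Fin n) (Fin n) ℂ) :=
  {X | ∀ w : List Ω, C (Mword M w X) = 0}

theorem le_comap_of_mem_span {R V W : Type*} [CommSemiring R] [AddCommMonoid V] [Module R V]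
    [AddCommMonoid W] [Module R W] {p : Submodule R V} {q : Submodule R W} {S : Set (V →ₗ[R] W)}
    {f : V →ₗ[R] W} (hS : ∀ g ∈ S, p ≤ q.comap g) (hf : f ∈ Submodule.span R S) :
    p ≤ q.comap f :=
  Submodule.span_le (p := Submodule.compatibleMaps p q).2 hS hf

section Congruence

variable {R V W : Type*} [Ring R] [AddCommGroup V] [Module R V] [AddCommGroup W] [Module R W]
  {N : Submodule R V}

theorem map_smodEq_of_le_comap {q : Submodule R W} {f : V →ₗ[R] W} (hf : N ≤ q.comap f) {x y : V}
    (hxy : x ≡ y [SMOD N]) : f x ≡ f y [SMOD q] :=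
  (hxy.map f).mono (Submodule.map_le_iff_le_comap.2 hf)

theorem smodEq_of_comp_eq_id_of_ker_le {r : V →ₗ[R] W} {j : W →ₗ[R] V}
    (hrj : r ∘ₗ j = LinearMap.id) (hker : LinearMap.ker (j ∘ₗ r) ≤ N) (x : V) :
    j (r x) ≡ x [SMOD N] := by
  have hrjr : r (j (r x)) = r x := LinearMap.congr_fun hrj (r x)
  refine SModEq.sub_mem.2 (hker ?_)
  rw [LinearMap.mem_ker, LinearMap.comp_apply, map_sub, hrjr, sub_self, map_zero]

theorem separated_step_smodEq {r : V →ₗ[R] W} {j : W →ₗ[R] V} {E : V →ₗ[R] V}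
    (hrj : ∀ x, j (r x) ≡ x [SMOD N]) (hE : N ≤ N.comap E) (K : V →ₗ[R] V) (v : W) :
    j (((r ∘ₗ E ∘ₗ j) ∘ₗ (r ∘ₗ K ∘ₗ j)) v) ≡ E (K (j v)) [SMOD N] :=
  calc
    j (r (E (j (r (K (j v)))))) ≡ E (j (r (K (j v)))) [SMOD N] := hrj _
    _ ≡ E (K (j v)) [SMOD N] := map_smodEq_of_le_comap hE (hrj _)

end Congruence

section ConditionalEvolution

variable {Ω V W Y : Type*} [AddCommGroup V] [Module ℂ V] [AddCommGroup W] [Module ℂ W]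
  [AddCommGroup Y] [Module ℂ Y] {M : Ω → V →ₗ[ℂ] V} {C : V →ₗ[ℂ] Y}

theorem Mword_smodEq {M' : Ω → W →ₗ[ℂ] W} {J : W →ₗ[ℂ] V} {N : Submodule ℂ V}
    (hM : ∀ k, N ≤ N.comap (M k)) (hJ : ∀ k v, J (M' k v) ≡ M k (J v) [SMOD N])
    (w : List Ω) {v : W} {x : V} (hvx : J v ≡ x [SMOD N]) :
    J (Mword M' w v) ≡ Mword M w x [SMOD N] := by
  induction w generalizing v x with
  | nil => exact hvx
  | cons k _ ih => exact ih ((hJ k v).trans (map_smodEq_of_le_comap (hM k) hvx))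

/-- The non-observable subspace of a conditional evolution on an arbitrary complex vector space,
as a submodule. For matrices its underlying set is `NonObs M C`. -/
def nonObservable (M : Ω → V →ₗ[ℂ] V) (C : V →ₗ[ℂ] Y) : Submodule ℂ V :=
  ⨅ w : List Ω, LinearMap.ker (C ∘ₗ Mword M w)

theorem mem_nonObservable {x : V} : x ∈ nonObservable M C ↔ ∀ w, C (Mword M w x) = 0 := by
  simp only [nonObservable, Submodule.mem_iInf, LinearMap.mem_ker, LinearMap.comp_apply]

theorem nonObservable_le_ker : nonObservable M C ≤ LinearMap.ker C :=
  fun _ hx => mem_nonObservable.1 hx []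

theorem nonObservable_le_comap (k : Ω) : nonObservable M C ≤ (nonObservable M C).comap (M k) :=
  fun _ hx => mem_nonObservable.2 fun w => mem_nonObservable.1 hx (k :: w)

theorem eq_of_smodEq_nonObservable {x y : V} (hxy : x ≡ y [SMOD nonObservable M C]) :
    C x = C y :=
  LinearMap.sub_mem_ker_iff.1 (nonObservable_le_ker (SModEq.sub_mem.1 hxy))

theorem separated_reduction_A1_general {K : Ω → V →ₗ[ℂ] V} {E : V →ₗ[ℂ] V}
    (hfac : ∀ k, M k = E ∘ₗ K k) (hE : E ∈ Submodule.span ℂ (Set.range M))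
    {R : V →ₗ[ℂ] W} {J : W →ₗ[ℂ] V} (hRJ : ∀ x, J (R x) ≡ x [SMOD nonObservable M C])
    (ρ : V) (w : List Ω) :
    C (Mword M w ρ) =
      C (J (Mword (fun k => (R ∘ₗ E ∘ₗ J) ∘ₗ (R ∘ₗ K k ∘ₗ J)) w (R ρ))) := by
  have hEN : nonObservable M C ≤ (nonObservable M C).comap E :=
    le_comap_of_mem_span (Set.forall_mem_range.2 nonObservable_le_comap) hE
  have hstep (k : Ω) (v : W) : J (((R ∘ₗ E ∘ₗ J) ∘ₗ (R ∘ₗ K k ∘ₗ J)) v) ≡ M k (J v)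
      [SMOD nonObservable M C] := by
    rw [hfac k]
    exact separated_step_smodEq hRJ hEN (K k) v
  exact (eq_of_smodEq_nonObservable (Mword_smodEq nonObservable_le_comap hstep w (hRJ ρ))).symm

end ConditionalEvolution

/-- Separated exact reduction under Assumption (A1): if `M_k = E ∘ K_k`, there are
scalars `λ_k` with `E = Σ_k λ_k M_k`, `R ∘ J = id` and `ker (J ∘ R) ⊆ N`, then the
reduced model with separately reduced dynamics `Ě = R ∘ E ∘ J` and conditioning
`Ǩ_k = R ∘ K_k ∘ J` reproduces the conditioned output. -/
theorem separated_reduction_A1 {Ω : Type*} [Fintype Ω] {n : ℕ} (hn : 1 ≤ n)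
    {Y : Type*} [AddCommGroup Y] [Module ℂ Y] [FiniteDimensional ℂ Y]
    {W : Type*} [AddCommGroup W] [Module ℂ W] [FiniteDimensional ℂ W]
    (M K : Ω → Matrix (Fin n) (Fin n) ℂ →ₗ[ℂ] Matrix (Fin n) (Fin n) ℂ)
    (E : Matrix (Fin n) (Fin n) ℂ →ₗ[ℂ] Matrix (Fin n) (Fin n) ℂ)
    (C : Matrix (Fin n) (Fin n) ℂ →ₗ[ℂ] Y)
    (hfac : ∀ k, M k = E.comp (K k))
    (lam : Ω → ℂ) (hE : E = ∑ k : Ω, lam k • M k)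
    (R : Matrix (Fin n) (Fin n) ℂ →ₗ[ℂ] W) (J : W →ₗ[ℂ] Matrix (Fin n) (Fin n) ℂ)
    (hRJ : R.comp J = LinearMap.id)
    (hker : ∀ X, J (R X) = 0 → X ∈ NonObs M C) :
    ∀ (ρ : Matrix (Fin n) (Fin n) ℂ) (w : List Ω),
      C (Mword M w ρ) =
        C (J (Mword
          (fun k => (R.comp (E.comp J)).comp (R.comp ((K k).comp J))) w (R ρ))) :=
  separated_reduction_A1_general hfac
    ((Submodule.mem_span_range_iff_exists_fun ℂ).2 ⟨lam, hE.symm⟩)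
    (smodEq_of_comp_eq_id_of_ker_le hRJ fun X hX => mem_nonObservable.2 (hker X hX))
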